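/- Let G be a countable discrete amenable group acting continuously on a compact metric space (X,d), let μ be a G-invariant, G-ergodic Borel probability measure on X, and let {F_n} be a tempered Følner sequence in G with lim_{n→∞} |F_n|/log n = ∞. Then for every δ > 0 and μ-almost every x ∈ X, limsup_{n→∞} −(1/|F_n|) log μ(B_{F_n}(x,δ)) ≤ h_μ(X,G). -/

import Mathlib

open Filter Set MeasureTheory Topology ENNReal Pointwise

variable {G X : Type*}

section Defs

variable [Group G] [MetricSpace X] [MulAction G X]

/-- The Bowen ball `B_F(x,ε) = {y : d(gx,gy) < ε for all g ∈ F}`. -/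
def bowenBall (F : Finset G) (x : X) (ε : ℝ) : Set X :=
  {y : X | ∀ g ∈ F, dist (g • x) (g • y) < ε}

/-- A Følner sequence: `|F_n ∆ gF_n|/|F_n| → 0` for every `g ∈ G`. -/
def IsFolnerSeq (F : ℕ → Finset G) : Prop :=
  ∀ g : G, Tendsto
    (fun n => ((symmDiff (F n : Set G) ((g * ·) '' (F n : Set G))).ncard : ℝ) / (F n).card)
    atTop (𝓝 0)

/-- A tempered sequence: `|⋃_{k<n} F_k⁻¹ F_n| ≤ C |F_n|` for all `n`. -/
def IsTemperedSeq (F : ℕ → Finset G) : Prop :=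
  ∃ C : ℝ, 0 < C ∧ ∀ n : ℕ,
    ((⋃ k ∈ Finset.range n, ((F k : Set G)⁻¹ * (F n : Set G))).ncard : ℝ) ≤ C * (F n).card

/-- The growth condition `lim_n |F_n| / log n = ∞`. -/
def GrowthCond (F : ℕ → Finset G) : Prop :=
  Tendsto (fun n : ℕ => ((F n).card : ℝ) / Real.log n) atTop atTop

/-- `M(Z,N,ε,s,{F_n})`: infimum of `∑ exp(-s |F_{n_i}|)` over countable families of Bowen
balls `B_{F_{n_i}}(x_i,ε)`, `n_i ≥ N`, covering `Z`. -/
noncomputable def ballM (F : ℕ → Finset G) (Z : Set X) (N : ℕ) (ε s : ℝ) : ℝ≥0∞ :=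
  ⨅ (I : Set (X × ℕ)) (_ : I.Countable) (_ : ∀ p ∈ I, N ≤ p.2)
    (_ : Z ⊆ ⋃ p ∈ I, bowenBall (F p.2) p.1 ε),
    ∑' p : I, ENNReal.ofReal (Real.exp (-s * ((F (p : X × ℕ).2).card : ℝ)))

/-- `M(Z,ε,s,{F_n}) = lim_{N→∞} M(Z,N,ε,s,{F_n})` (the quantity is nondecreasing in `N`). -/
noncomputable def ballMN (F : ℕ → Finset G) (Z : Set X) (ε s : ℝ) : ℝ≥0∞ :=
  ⨆ N : ℕ, ballM F Z N ε s

/-- `M(Z,s,{F_n}) = lim_{ε→0} M(Z,ε,s,{F_n})` (the quantity is nondecreasing as `ε` decreases). -/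
noncomputable def ballMtot (F : ℕ → Finset G) (Z : Set X) (s : ℝ) : ℝ≥0∞ :=
  ⨆ (ε : ℝ) (_ : 0 < ε), ballMN F Z ε s

/-- The Bowen topological entropy of `Z` along `{F_n}`: the critical value of `s` at which
`M(Z,s,{F_n})` jumps from `+∞` to `0`, i.e. `inf {s : M(Z,s,{F_n}) = 0}`. -/
noncomputable def bowenEnt (F : ℕ → Finset G) (Z : Set X) : ℝ≥0∞ :=
  ⨅ (s : ℝ) (_ : ballMtot F Z s = 0), ENNReal.ofReal s

/-- The weighted quantity `W(f,N,ε,s,{F_n})`. -/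
noncomputable def wtW (F : ℕ → Finset G) (f : X → ℝ≥0∞) (N : ℕ) (ε s : ℝ) : ℝ≥0∞ :=
  ⨅ (I : Set (X × ℕ)) (c : X × ℕ → ℝ≥0∞) (_ : I.Countable)
    (_ : ∀ p ∈ I, N ≤ p.2 ∧ 0 < c p ∧ c p < ⊤)
    (_ : ∀ x : X, f x ≤ ∑' p : I, c (p : X × ℕ) *
        (bowenBall (F (p : X × ℕ).2) (p : X × ℕ).1 ε).indicator (fun _ => (1 : ℝ≥0∞)) x),
    ∑' p : I, c (p : X × ℕ) * ENNReal.ofReal (Real.exp (-s * ((F (p : X × ℕ).2).card : ℝ)))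

/-- `W(Z,N,ε,s,{F_n}) = W(χ_Z,N,ε,s,{F_n})`. -/
noncomputable def wtWset (F : ℕ → Finset G) (Z : Set X) (N : ℕ) (ε s : ℝ) : ℝ≥0∞ :=
  wtW F (Z.indicator fun _ => (1 : ℝ≥0∞)) N ε s

/-- `W(Z,ε,s,{F_n}) = lim_{N→∞} W(Z,N,ε,s,{F_n})`. -/
noncomputable def wtWN (F : ℕ → Finset G) (Z : Set X) (ε s : ℝ) : ℝ≥0∞ :=
  ⨆ N : ℕ, wtWset F Z N ε s

/-- `W(Z,s,{F_n}) = lim_{ε→0} W(Z,ε,s,{F_n})`. -/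
noncomputable def wtWtot (F : ℕ → Finset G) (Z : Set X) (s : ℝ) : ℝ≥0∞ :=
  ⨆ (ε : ℝ) (_ : 0 < ε), wtWN F Z ε s

/-- The weighted Bowen topological entropy of `Z` along `{F_n}`. -/
noncomputable def wtBowenEnt (F : ℕ → Finset G) (Z : Set X) : ℝ≥0∞ :=
  ⨅ (s : ℝ) (_ : wtWtot F Z s = 0), ENNReal.ofReal s

/-- A finite open cover of `X`. -/
def IsFinOpenCover (𝒰 : Finset (Set X)) : Prop :=
  (∀ U ∈ 𝒰, IsOpen U) ∧ ⋃₀ (𝒰 : Set (Set X)) = Set.univ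

/-- `N(⋁_{g∈F} g⁻¹𝒰)`: the minimal cardinality of a subcover of the refined cover, whose members
are the sets `X(𝐔) = ⋂_{g∈F} g⁻¹ U_g` with `U_g ∈ 𝒰`. -/
noncomputable def coverNum (𝒰 : Finset (Set X)) (F : Finset G) : ℕ :=
  sInf {k : ℕ | ∃ Λ : Finset (G → Set X), Λ.card = k ∧
    (∀ u ∈ Λ, ∀ g ∈ F, u g ∈ 𝒰) ∧
    (⋃ u ∈ Λ, ⋂ g ∈ F, (fun y => g • y) ⁻¹' u g) = Set.univ}

/-- `h_top(G,𝒰) = lim_n (1/|F_n|) log N(⋁_{g∈F_n} g⁻¹𝒰)` (the limit exists by Ornstein–Weiss,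
hence equals the `limsup`). -/
noncomputable def coverTopEnt (F : ℕ → Finset G) (𝒰 : Finset (Set X)) : ℝ :=
  limsup (fun n => Real.log (coverNum 𝒰 (F n)) / (F n).card) atTop

/-- The topological entropy `h_top(X,G)`, the supremum over finite open covers. -/
noncomputable def topEnt (X : Type*) [MetricSpace X] [MulAction G X] (F : ℕ → Finset G) : ℝ≥0∞ :=
  ⨆ (𝒰 : Finset (Set X)) (_ : IsFinOpenCover 𝒰), ENNReal.ofReal (coverTopEnt F 𝒰)

/-- `M(Z,𝒰,N,s,{F_n})`: infimum of `∑_{𝐔∈Λ} exp(-s m(𝐔))` over collections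
`Λ ⊆ ⋃_{j≥N} 𝒲_{F_j}(𝒰)` covering `Z`; an element `𝐔 ∈ 𝒲_{F_j}(𝒰)` is encoded as a pair
`(j, u)` with `u g ∈ 𝒰` for `g ∈ F_j` (and `u g = ∅` elsewhere), `X(𝐔) = ⋂_{g∈F_j} g⁻¹ (u g)`
and `m(𝐔) = |F_j|`. -/
noncomputable def covM (F : ℕ → Finset G) (𝒰 : Finset (Set X)) (Z : Set X) (N : ℕ) (s : ℝ) :
    ℝ≥0∞ :=
  ⨅ (Λ : Set (ℕ × (G → Set X)))
    (_ : ∀ p ∈ Λ, N ≤ p.1 ∧ (∀ g ∈ F p.1, p.2 g ∈ 𝒰) ∧ (∀ g ∉ F p.1, p.2 g = ∅))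
    (_ : Z ⊆ ⋃ p ∈ Λ, ⋂ g ∈ F p.1, (fun y => g • y) ⁻¹' p.2 g),
    ∑' p : Λ, ENNReal.ofReal (Real.exp (-s * ((F (p : ℕ × (G → Set X)).1).card : ℝ)))

/-- `M(Z,𝒰,s,{F_n}) = lim_{N→∞} M(Z,𝒰,N,s,{F_n})`. -/
noncomputable def covMtot (F : ℕ → Finset G) (𝒰 : Finset (Set X)) (Z : Set X) (s : ℝ) : ℝ≥0∞ :=
  ⨆ N : ℕ, covM F 𝒰 Z N s

/-- The cover-based Bowen topological entropy `h^B_top(𝒰,Z,{F_n}) = inf {s : M(Z,𝒰,s,{F_n}) = 0}`. -/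
noncomputable def covBowenEnt (F : ℕ → Finset G) (𝒰 : Finset (Set X)) (Z : Set X) : ℝ≥0∞ :=
  ⨅ (s : ℝ) (_ : covMtot F 𝒰 Z s = 0), ENNReal.ofReal s

/-- `diam(𝒰) = max {diam U : U ∈ 𝒰}`. -/
noncomputable def coverDiam (𝒰 : Finset (Set X)) : ℝ≥0∞ :=
  ⨆ U ∈ 𝒰, EMetric.diam U

end Defs

section MeasureDefs

variable [Group G] [MetricSpace X] [MulAction G X] [MeasurableSpace X]

/-- The quantity `-(1/m) log μ(B)`, with value `+∞` when `μ B = 0`. -/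
noncomputable def locTerm (μ : Measure X) (B : Set X) (m : ℕ) : ℝ≥0∞ :=
  if μ B = 0 then ⊤ else ENNReal.ofReal (-(Real.log ((μ B).toReal)) / (m : ℝ))

/-- The lower local entropy `h̲_μ^{loc}(x,ε,{F_n}) = liminf_n -(1/|F_n|) log μ(B_{F_n}(x,ε))`. -/
noncomputable def lowLoc (μ : Measure X) (F : ℕ → Finset G) (x : X) (ε : ℝ) : ℝ≥0∞ :=
  liminf (fun n => locTerm μ (bowenBall (F n) x ε) (F n).card) atTop

/-- The upper local entropy `limsup_n -(1/|F_n|) log μ(B_{F_n}(x,ε))`. -/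
noncomputable def upLoc (μ : Measure X) (F : ℕ → Finset G) (x : X) (ε : ℝ) : ℝ≥0∞ :=
  limsup (fun n => locTerm μ (bowenBall (F n) x ε) (F n).card) atTop

/-- `h̲_μ^{loc}(x,{F_n}) = lim_{ε→0} h̲_μ^{loc}(x,ε,{F_n})` (a monotone limit, i.e. the
supremum over `ε > 0`). -/
noncomputable def lowLocPt (μ : Measure X) (F : ℕ → Finset G) (x : X) : ℝ≥0∞ :=
  ⨆ (ε : ℝ) (_ : 0 < ε), lowLoc μ F x ε

/-- `h̲_μ^{loc}({F_n}) = ∫_X h̲_μ^{loc}(x,{F_n}) dμ(x)`. -/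
noncomputable def lowLocEnt (μ : Measure X) (F : ℕ → Finset G) : ℝ≥0∞ :=
  ∫⁻ x, lowLocPt μ F x ∂μ

/-- A finite measurable partition of `X`, presented as `P : Fin k → Set X`. -/
def IsMeasPartition {k : ℕ} (P : Fin k → Set X) : Prop :=
  (∀ i, MeasurableSet (P i)) ∧ Pairwise (Function.onFun Disjoint P) ∧ (⋃ i, P i) = Set.univ

/-- The static entropy `H_μ(𝒫_F)` of the join `𝒫_F = ⋁_{g∈F} g⁻¹𝒫`; its atoms are the
nonempty sets `⋂_{g∈F} g⁻¹ P(u g)` (distinct choices `u` yield disjoint atoms, and empty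
atoms contribute `0`). -/
noncomputable def partH (μ : Measure X) {k : ℕ} (P : Fin k → Set X) (F : Finset G) : ℝ :=
  letI := Classical.decEq G
  ∑ u : (↥F → Fin k),
    Real.negMulLog ((μ (⋂ g : ↥F, (fun y => (g : G) • y) ⁻¹' P (u g))).toReal)

/-- `h_μ(G,𝒫) = liminf_n (1/|F_n|) H_μ(𝒫_{F_n})`. -/
noncomputable def partEnt (μ : Measure X) (F : ℕ → Finset G) {k : ℕ} (P : Fin k → Set X) : ℝ :=
  liminf (fun n => partH μ P (F n) / (F n).card) atTop

/-- The measure-theoretic entropy `h_μ(X,G) = sup_𝒫 h_μ(G,𝒫)` (it is independent of the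
Følner sequence used to compute it). -/
noncomputable def measEnt (μ : Measure X) (F : ℕ → Finset G) : ℝ≥0∞ :=
  ⨆ (k : ℕ) (P : Fin k → Set X) (_ : IsMeasPartition P), ENNReal.ofReal (partEnt μ F P)

/-- Ergodicity of the `G`-action w.r.t. `μ`. -/
def IsErgodicGAction (G : Type*) [Group G] [MulAction G X] (μ : Measure X) : Prop :=
  ∀ A : Set X, MeasurableSet A → (∀ g : G, (g • ·) ⁻¹' A = A) → μ A = 0 ∨ μ A = 1

end MeasureDefs

/-!
Let `p` be a measurable coloring of `X` whose color classes have diameter less than `δ`, and let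
`𝒫` be the partition into color classes. The atom of `𝒫_{F_n}` containing `x` lies in the Bowen
ball `B_{F_n}(x, δ)`, so it suffices to bound the information `-log μ(𝒫_{F_n}(x))` from above.

Fix a nonempty finite `A ⊆ G`. The translates `A * {g}`, `g ∈ A⁻¹ F_n`, cover each element of `F_n`
exactly `|A|` times, so Shearer's inequality, in the product form
`∑_u ∏_g μ(𝒫_{A g}(u)) ^ (1 / |A|) ≤ 1` with `u` ranging over the words on `F_n`, combines with
Markov's inequality and the Borel–Cantelli lemma (here `|F_n| / log n → ∞` enters) into the almost
sure eventual bound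
`-log μ(𝒫_{F_n}(x)) ≤ ε |F_n| + (1 / |A|) ∑_{g ∈ A⁻¹ F_n} -log μ(𝒫_A(g • x))`.
Since `|A⁻¹ F_n \ F_n| = o(|F_n|)`, Lindenstrauss' pointwise ergodic theorem for tempered Følner
sequences identifies the right-hand side with `|F_n| (H_μ(𝒫_A) / |A| + ε + o(1))`. Choosing `A`
among the `F_n` makes `H_μ(𝒫_A) / |A|` as close to the `lim inf` as desired.

The pointwise ergodic theorem itself comes from a Vitali-type covering argument, which gives the
weak-type `(1, 1)` maximal inequality, and from the density in `L²` of constants plus coboundaries.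
-/

open scoped Finset BigOperators NNReal

section Folner

variable {F : ℕ → Finset G}

theorem GrowthCond.tendsto_card (hF : GrowthCond F) :
    Tendsto (fun n => (#(F n) : ℝ)) atTop atTop := by
  have hlog : Tendsto (fun n : ℕ => Real.log n) atTop atTop :=
    Real.tendsto_log_atTop.comp tendsto_natCast_atTop_atTop
  refine (hF.atTop_mul_atTop₀ hlog).congr' ?_
  filter_upwards [hlog.eventually_gt_atTop 0] with n hn
  exact div_mul_cancel₀ _ hn.ne'

theorem GrowthCond.eventually_nonempty (hF : GrowthCond F) : ∀ᶠ n in atTop, (F n).Nonempty := by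
  filter_upwards [hF.tendsto_card.eventually_gt_atTop 0] with n hn
  exact Finset.card_pos.mp (mod_cast hn)

theorem GrowthCond.summable_exp_neg_mul_card (hF : GrowthCond F) {ε : ℝ} (hε : 0 < ε) :
    Summable fun n => Real.exp (-(ε * #(F n))) := by
  refine .of_norm_bounded_eventually_nat (g := fun n : ℕ => ((n : ℝ) ^ 2)⁻¹)
    (Real.summable_nat_pow_inv.mpr one_lt_two) ?_
  filter_upwards [hF.eventually_ge_atTop (2 / ε), eventually_gt_atTop 1] with n hratio hn
  have hlog : 0 < Real.log n := Real.log_pos (mod_cast hn)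
  have hcard : 2 * Real.log n ≤ ε * #(F n) := by
    rwa [div_le_div_iff₀ hε hlog, mul_comm (#(F n) : ℝ)] at hratio
  calc ‖Real.exp (-(ε * #(F n)))‖
    _ = Real.exp (-(ε * #(F n))) := Real.norm_of_nonneg (Real.exp_nonneg _)
    _ ≤ Real.exp (-Real.log (n ^ 2)) := by
        rw [Real.log_pow]
        exact Real.exp_le_exp.mpr (neg_le_neg (mod_cast hcard))
    _ = ((n : ℝ) ^ 2)⁻¹ := by rw [Real.exp_neg, Real.exp_log (by positivity)]

variable [Group G] [DecidableEq G]

theorem IsFolnerSeq.tendsto_card_smul_sdiff (hF : IsFolnerSeq F) (g : G) :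
    Tendsto (fun n => (#(g • F n \ F n) : ℝ) / #(F n)) atTop (𝓝 0) := by
  refine squeeze_zero (fun n => by positivity) (fun n => ?_) (hF g)
  gcongr
  rw [← Set.ncard_coe_finset]
  refine Set.ncard_le_ncard ?_ ((F n).finite_toSet.symmDiff ((F n).finite_toSet.image _))
  rw [Finset.coe_sdiff, Finset.coe_smul_finset]
  exact le_sup_right

theorem IsFolnerSeq.tendsto_card_mul_sdiff (hF : IsFolnerSeq F) (T : Finset G) :
    Tendsto (fun n => (#((T * F n) \ F n) : ℝ) / #(F n)) atTop (𝓝 0) := by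
  refine squeeze_zero (fun n => by positivity) (fun n => ?_)
    (by simpa using tendsto_finsetSum T fun g _ => hF.tendsto_card_smul_sdiff g)
  have hcover : (T * F n) \ F n ⊆ T.biUnion fun g => g • F n \ F n := fun x hx => by
    obtain ⟨hx, hxF⟩ := Finset.mem_sdiff.mp hx
    obtain ⟨g, hg, h, hh, rfl⟩ := Finset.mem_mul.mp hx
    exact Finset.mem_biUnion.mpr
      ⟨g, hg, Finset.mem_sdiff.mpr ⟨Finset.smul_mem_smul_finset hh, hxF⟩⟩
  rw [← Finset.sum_div]
  gcongr
  exact_mod_cast (Finset.card_le_card hcover).trans Finset.card_biUnion_le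

theorem IsFolnerSeq.eventually_card_mul_le (hF : IsFolnerSeq F)
    (hne : ∀ᶠ n in atTop, (F n).Nonempty) (T : Finset G) :
    ∀ᶠ n in atTop, #(T * F n) ≤ 2 * #(F n) := by
  filter_upwards [(hF.tendsto_card_mul_sdiff T).eventually_le_const one_pos, hne] with n hn hFn
  have hsdiff : #((T * F n) \ F n) ≤ #(F n) := by
    rw [div_le_one (by simpa using hFn)] at hn
    exact_mod_cast hn
  have := Finset.card_le_card_sdiff_add_card (s := T * F n) (t := F n)
  lia

/-- Temperedness with a given constant, phrased with finsets and in `ℝ≥0∞` so that it can be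
combined with lower Lebesgue integrals. -/
def IsTemperedWith (F : ℕ → Finset G) (C : ℝ≥0∞) : Prop :=
  ∀ n, (#((Finset.range n).biUnion fun k => (F k)⁻¹ * F n) : ℝ≥0∞) ≤ C * #(F n)

theorem IsTemperedSeq.exists_isTemperedWith (hF : IsTemperedSeq F) :
    ∃ C : ℝ≥0, IsTemperedWith F C := by
  obtain ⟨C, hC, hF⟩ := hF
  lift C to ℝ≥0 using hC.le
  refine ⟨C, fun n => ?_⟩
  have hn : (#((Finset.range n).biUnion fun k => (F k)⁻¹ * F n) : ℝ) ≤ C * #(F n) := by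
    rw [← Set.ncard_coe_finset]
    simpa only [Finset.coe_biUnion, Finset.coe_mul, Finset.coe_inv, Finset.mem_coe] using hF n
  exact_mod_cast hn

end Folner

section Covering

variable [Group G] [DecidableEq G]

theorem sum_mul_insert (f : G → ℝ≥0∞) (A S : Finset G) (a : G) :
    ∑ g ∈ A * insert a S, f g = ∑ g ∈ A * S, f g + ∑ h ∈ A with h * a ∉ A * S, f (h * a) := by
  have hsdiff : (A * insert a S) \ (A * S) = {h ∈ A | h * a ∉ A * S}.image (· * a) := by
    ext x
    simp only [Finset.mem_sdiff, Finset.mem_mul, Finset.mem_insert, Finset.mem_image,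
      Finset.mem_filter]
    grind
  rw [← Finset.sum_sdiff (Finset.mul_subset_mul_left (Finset.subset_insert a S)), add_comm,
    hsdiff, Finset.sum_image (mul_left_injective a).injOn]

theorem exists_subset_half_covered {f : G → ℝ≥0∞} {t : ℝ≥0∞} {A : Finset G} (B : Finset G)
    (hB : ∀ a ∈ B, 2 * t * #A ≤ ∑ h ∈ A, f (h * a)) :
    ∃ S ⊆ B, t * #A * #S ≤ ∑ g ∈ A * S, f g ∧
      ∀ a ∈ B, t * #A ≤ ∑ h ∈ A with h * a ∈ A * S, f (h * a) := by
  induction B using Finset.induction with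
  | empty => exact ⟨∅, by simp⟩
  | insert a B _ ih =>
    obtain ⟨S, hSB, hcard, hcov⟩ := ih fun b hb => hB b (Finset.mem_insert_of_mem hb)
    have hBa := hB a (Finset.mem_insert_self a B)
    by_cases ha : t * #A ≤ ∑ h ∈ A with h * a ∈ A * S, f (h * a)
    · refine ⟨S, hSB.trans (Finset.subset_insert a B), hcard, fun b hb => ?_⟩
      rcases Finset.mem_insert.mp hb with rfl | hb
      exacts [ha, hcov b hb]
    have huncov : t * #A ≤ ∑ h ∈ A with h * a ∉ A * S, f (h * a) := by
      by_contra! huncov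
      refine hBa.not_gt ?_
      rw [← Finset.sum_filter_add_sum_filter_not A (fun h => h * a ∈ A * S), mul_assoc, two_mul]
      exact ENNReal.add_lt_add (not_le.mp ha) huncov
    refine ⟨insert a S, Finset.insert_subset_insert a hSB, ?_, fun b hb => ?_⟩
    · rw [sum_mul_insert]
      calc t * #A * #(insert a S) ≤ t * #A * (#S + 1 : ℕ) := by
            gcongr; exact Finset.card_insert_le a S
        _ = t * #A * #S + t * #A := by push_cast; ring
        _ ≤ _ := add_le_add hcard huncov
    rcases Finset.mem_insert.mp hb with rfl | hb
    · rw [Finset.filter_true_of_mem fun h hh =>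
        Finset.mul_mem_mul hh (Finset.mem_insert_self b S)]
      refine le_trans ?_ hBa
      gcongr
      exact le_mul_of_one_le_left' one_le_two
    · refine (hcov b hb).trans (Finset.sum_le_sum_of_subset ?_)
      exact Finset.monotone_filter_right A fun h _ hh =>
        Finset.mul_subset_mul_left (Finset.subset_insert a S) hh

theorem sum_sum_filter_mul_mem_le (f : G → ℝ≥0∞) (A B V : Finset G) :
    ∑ a ∈ B, ∑ h ∈ A with h * a ∈ V, f (h * a) ≤ #A * ∑ g ∈ V, f g := by
  simp only [Finset.sum_filter]
  rw [Finset.sum_comm, ← nsmul_eq_mul]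
  refine Finset.sum_le_card_nsmul _ _ _ fun h _ => ?_
  calc ∑ a ∈ B, (if h * a ∈ V then f (h * a) else 0)
    _ = ∑ g ∈ B.image (h * ·) with g ∈ V, f g := by
      rw [Finset.sum_filter, Finset.sum_image (mul_right_injective h).injOn]
    _ ≤ ∑ g ∈ V, f g := Finset.sum_le_sum_of_subset fun g hg => (Finset.mem_filter.mp hg).2

theorem exists_subset_card_mul_le {f : G → ℝ≥0∞} {t : ℝ≥0∞} {A B : Finset G}
    (hB : ∀ a ∈ B, 2 * t * #A < ∑ h ∈ A, f (h * a)) :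
    ∃ S ⊆ B, t * #A * #S ≤ ∑ g ∈ A * S, f g ∧ t * #B ≤ ∑ g ∈ A * S, f g := by
  obtain ⟨S, hSB, hcard, hcov⟩ := exists_subset_half_covered B fun a ha => (hB a ha).le
  refine ⟨S, hSB, hcard, ?_⟩
  obtain rfl | ⟨a, ha⟩ := B.eq_empty_or_nonempty
  · simp
  have hA : #A ≠ 0 := by
    intro h
    simpa [Finset.card_eq_zero.mp h] using hB a ha
  refine (ENNReal.mul_le_mul_iff_right (Nat.cast_ne_zero.mpr hA) (natCast_ne_top _)).mp ?_
  calc (#A : ℝ≥0∞) * (t * #B) = ∑ _a ∈ B, t * #A := by rw [Finset.sum_const, nsmul_eq_mul]; ring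
    _ ≤ ∑ a ∈ B, ∑ h ∈ A with h * a ∈ A * S, f (h * a) := Finset.sum_le_sum hcov
    _ ≤ #A * ∑ g ∈ A * S, f g := sum_sum_filter_mul_mem_le f A B (A * S)

theorem disjoint_mul_sdiff_inv_mul (A B V : Finset G) : Disjoint V (A * (B \ (A⁻¹ * V))) := by
  rw [Finset.disjoint_right]
  rintro _ hx hV
  obtain ⟨h, hh, a, ha, rfl⟩ := Finset.mem_mul.mp hx
  refine (Finset.mem_sdiff.mp ha).2 ?_
  simpa using Finset.mul_mem_mul (Finset.inv_mem_inv hh) hV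

theorem biUnion_range_succ_subset (F B : ℕ → Finset G) (S : Finset G) (N : ℕ) :
    (Finset.range (N + 1)).biUnion B ⊆
      B N ∪ ((Finset.range N).biUnion fun k => (F k)⁻¹ * F N) * S ∪
        (Finset.range N).biUnion fun k => B k \ ((F k)⁻¹ * (F N * S)) := by
  rw [Finset.range_add_one, Finset.biUnion_insert, Finset.union_assoc]
  refine Finset.union_subset_union_right (Finset.biUnion_subset.mpr fun k hk a ha => ?_)
  by_cases haV : a ∈ (F k)⁻¹ * (F N * S)
  · rw [← mul_assoc] at haV
    exact Finset.mem_union_left _ (Finset.mul_subset_mul_right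
      (Finset.subset_biUnion_of_mem (fun k => (F k)⁻¹ * F N) hk) haV)
  · exact Finset.mem_union_right _
      (Finset.mem_biUnion.mpr ⟨k, hk, Finset.mem_sdiff.mpr ⟨ha, haV⟩⟩)

theorem IsTemperedWith.mul_card_biUnion_le {F : ℕ → Finset G} {C t : ℝ≥0∞}
    (hF : IsTemperedWith F C) (f : G → ℝ≥0∞) (N : ℕ) (B : ℕ → Finset G)
    (hB : ∀ k < N, ∀ a ∈ B k, 2 * t * #(F k) < ∑ h ∈ F k, f (h * a)) :
    t * #((Finset.range N).biUnion B) ≤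
      (C + 1) * ∑ g ∈ (Finset.range N).biUnion fun k => F k * B k, f g := by
  induction N generalizing B with
  | zero => simp
  | succ N ih =>
    obtain ⟨S, hSB, hcard, hBN⟩ := exists_subset_card_mul_le (hB N N.lt_succ_self)
    set V := F N * S
    set T := (Finset.range N).biUnion fun k => (F k)⁻¹ * F N
    set B' : ℕ → Finset G := fun k => B k \ ((F k)⁻¹ * V)
    set W := (Finset.range N).biUnion fun k => F k * B' k
    have hB'B : ∀ k, B' k ⊆ B k := fun k => Finset.sdiff_subset
    have hB' : t * #((Finset.range N).biUnion B') ≤ (C + 1) * ∑ g ∈ W, f g :=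
      ih B' fun k hk a ha => hB k (by lia) a (hB'B k ha)
    have hTS : t * #(T * S) ≤ C * ∑ g ∈ V, f g :=
      calc t * #(T * S) ≤ t * (#T * #S) := by gcongr; exact_mod_cast Finset.card_mul_le
        _ ≤ t * (C * #(F N) * #S) := by gcongr; exact hF N
        _ = C * (t * #(F N) * #S) := by ring
        _ ≤ C * ∑ g ∈ V, f g := by gcongr
    have hVW : Disjoint V W := (Finset.disjoint_biUnion_right _ _ _).mpr fun k _ =>
      disjoint_mul_sdiff_inv_mul (F k) (B k) V
    calc t * #((Finset.range (N + 1)).biUnion B)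
      _ ≤ t * (#(B N) + #(T * S) + #((Finset.range N).biUnion B')) := by
        gcongr
        exact_mod_cast (Finset.card_le_card (biUnion_range_succ_subset F B S N)).trans
          ((Finset.card_union_le _ _).trans (by gcongr; exact Finset.card_union_le _ _))
      _ = t * #(B N) + t * #(T * S) + t * #((Finset.range N).biUnion B') := by ring
      _ ≤ ∑ g ∈ V, f g + C * ∑ g ∈ V, f g + (C + 1) * ∑ g ∈ W, f g := by gcongr
      _ = (C + 1) * ∑ g ∈ V ∪ W, f g := by rw [Finset.sum_union hVW]; ring
      _ ≤ (C + 1) * ∑ g ∈ (Finset.range (N + 1)).biUnion fun k => F k * B k, f g := by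
        rw [Finset.range_add_one, Finset.biUnion_insert]
        gcongr
        · exact Finset.mul_subset_mul_left hSB
        · exact Finset.biUnion_mono fun k _ => Finset.mul_subset_mul_left (hB'B k)

end Covering

section Maximal

variable [Group G] [MulAction G X]

/-- The points whose ergodic sum of `ψ` over one of `F 0, …, F (N - 1)` exceeds `s` times the
cardinality of that set: the superlevel set of the maximal function in the maximal inequality. -/
def exceedSet (F : ℕ → Finset G) (ψ : X → ℝ≥0∞) (s : ℝ≥0∞) (N : ℕ) : Set X :=
  {x | ∃ k < N, s * #(F k) < ∑ h ∈ F k, ψ (h • x)}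

theorem IsTemperedWith.mul_sum_indicator_exceedSet_le [DecidableEq G] {F : ℕ → Finset G}
    {C t : ℝ≥0∞} (hF : IsTemperedWith F C) (ψ : X → ℝ≥0∞) (N : ℕ) (D : Finset G) (x : X) :
    t * ∑ d ∈ D, (exceedSet F ψ (2 * t) N).indicator 1 (d • x) ≤
      (C + 1) * ∑ g ∈ (Finset.range N).biUnion F * D, ψ (g • x) := by
  classical
  set B : ℕ → Finset G := fun k => {d ∈ D | 2 * t * #(F k) < ∑ h ∈ F k, ψ (h • d • x)} with hB
  have hcount : ∑ d ∈ D, (exceedSet F ψ (2 * t) N).indicator (1 : X → ℝ≥0∞) (d • x) =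
      #((Finset.range N).biUnion B) := by
    simp only [Set.indicator_apply, Pi.one_apply, Finset.sum_boole, exceedSet, Set.mem_ofPred_eq]
    congr 2
    ext d
    simp only [hB, Finset.mem_filter, Finset.mem_biUnion, Finset.mem_range]
    grind
  have hcover : ((Finset.range N).biUnion fun k => F k * B k) ⊆
      (Finset.range N).biUnion F * D := Finset.biUnion_subset.mpr fun k hk =>
    Finset.mul_subset_mul (Finset.subset_biUnion_of_mem F hk) (Finset.filter_subset _ _)
  rw [hcount]
  refine (hF.mul_card_biUnion_le (fun g => ψ (g • x)) N B fun k _ d hd => ?_).trans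
    (by gcongr)
  simpa only [mul_smul] using (Finset.mem_filter.mp hd).2

variable [MeasurableSpace X] [MeasurableConstSMul G X] {μ : Measure X}
  [SMulInvariantMeasure G X μ]

theorem lintegral_comp_smul (ψ : X → ℝ≥0∞) (g : G) : ∫⁻ x, ψ (g • x) ∂μ = ∫⁻ x, ψ x ∂μ :=
  (measurePreserving_smul g μ).lintegral_comp_emb (measurableEmbedding_const_smul g) ψ

theorem aemeasurable_comp_const_smul {β : Type*} [MeasurableSpace β] {ψ : X → β}
    (hψ : AEMeasurable ψ μ) (g : G) : AEMeasurable (fun x => ψ (g • x)) μ :=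
  hψ.comp_quasiMeasurePreserving (measurePreserving_smul g μ).quasiMeasurePreserving

theorem lintegral_sum_comp_smul {ψ : X → ℝ≥0∞} (hψ : AEMeasurable ψ μ) (D : Finset G) :
    ∫⁻ x, ∑ g ∈ D, ψ (g • x) ∂μ = #D * ∫⁻ x, ψ x ∂μ := by
  rw [lintegral_finsetSum' D fun g _ => aemeasurable_comp_const_smul hψ g]
  simp only [lintegral_comp_smul, Finset.sum_const, nsmul_eq_mul]

theorem nullMeasurableSet_exceedSet (F : ℕ → Finset G) {ψ : X → ℝ≥0∞} (hψ : AEMeasurable ψ μ)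
    (s : ℝ≥0∞) (N : ℕ) : NullMeasurableSet (exceedSet F ψ s N) μ := by
  have : exceedSet F ψ s N = ⋃ k ∈ Finset.range N, {x | s * #(F k) < ∑ h ∈ F k, ψ (h • x)} := by
    ext x
    simp [exceedSet]
  rw [this]
  refine Finset.nullMeasurableSet_biUnion _ fun k _ => nullMeasurableSet_lt aemeasurable_const ?_
  exact Finset.aemeasurable_fun_sum _ fun h _ => aemeasurable_comp_const_smul hψ h

variable [DecidableEq G] {F : ℕ → Finset G} {C : ℝ≥0∞}

theorem IsTemperedWith.mul_measure_exceedSet_le (hF : IsTemperedWith F C) (hFol : IsFolnerSeq F)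
    (hne : ∀ᶠ n in atTop, (F n).Nonempty) {ψ : X → ℝ≥0∞} (hψ : AEMeasurable ψ μ) (t : ℝ≥0∞)
    (N : ℕ) :
    t * μ (exceedSet F ψ (2 * t) N) ≤ 2 * (C + 1) * ∫⁻ x, ψ x ∂μ := by
  set T := (Finset.range N).biUnion F
  set E := exceedSet F ψ (2 * t) N
  have hE : NullMeasurableSet E μ := nullMeasurableSet_exceedSet F hψ _ N
  have hE1 : AEMeasurable (E.indicator (1 : X → ℝ≥0∞)) μ := aemeasurable_one.indicator₀ hE
  obtain ⟨m, hcard, hm⟩ := ((hFol.eventually_card_mul_le hne T).and hne).exists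
  have hm0 : (#(F m) : ℝ≥0∞) ≠ 0 := Nat.cast_ne_zero.mpr hm.card_ne_zero
  refine (ENNReal.mul_le_mul_iff_right hm0 (natCast_ne_top _)).mp ?_
  calc (#(F m) : ℝ≥0∞) * (t * μ E)
    _ = t * (#(F m) * ∫⁻ x, E.indicator 1 x ∂μ) := by rw [lintegral_indicator_one₀ hE]; ring
    _ = t * ∫⁻ x, ∑ d ∈ F m, E.indicator 1 (d • x) ∂μ := by
      rw [lintegral_sum_comp_smul hE1]
    _ ≤ ∫⁻ x, t * ∑ d ∈ F m, E.indicator 1 (d • x) ∂μ := lintegral_const_mul_le t _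
    _ ≤ ∫⁻ x, (C + 1) * ∑ g ∈ T * F m, ψ (g • x) ∂μ :=
      lintegral_mono fun x => hF.mul_sum_indicator_exceedSet_le ψ N (F m) x
    _ = (C + 1) * (#(T * F m) * ∫⁻ x, ψ x ∂μ) := by
      rw [lintegral_const_mul'' _
        (Finset.aemeasurable_fun_sum _ fun g _ => aemeasurable_comp_const_smul hψ g),
        lintegral_sum_comp_smul hψ]
    _ ≤ (C + 1) * (2 * #(F m) * ∫⁻ x, ψ x ∂μ) := by gcongr; exact_mod_cast hcard
    _ = #(F m) * (2 * (C + 1) * ∫⁻ x, ψ x ∂μ) := by ring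

theorem IsTemperedWith.mul_measure_iUnion_exceedSet_le (hF : IsTemperedWith F C)
    (hFol : IsFolnerSeq F) (hne : ∀ᶠ n in atTop, (F n).Nonempty) {ψ : X → ℝ≥0∞}
    (hψ : AEMeasurable ψ μ) (t : ℝ≥0∞) :
    t * μ {x | ∃ k, 2 * t * #(F k) < ∑ h ∈ F k, ψ (h • x)} ≤ 2 * (C + 1) * ∫⁻ x, ψ x ∂μ := by
  have hmono : Monotone (exceedSet F ψ (2 * t)) := fun M N hMN x ⟨k, hk, hx⟩ =>
    ⟨k, hk.trans_le hMN, hx⟩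
  have hunion : {x | ∃ k, 2 * t * #(F k) < ∑ h ∈ F k, ψ (h • x)} =
      ⋃ N, exceedSet F ψ (2 * t) N := by
    ext x
    simp only [exceedSet, Set.mem_ofPred_eq, Set.mem_iUnion]
    exact ⟨fun ⟨k, hk⟩ => ⟨k + 1, k, k.lt_succ_self, hk⟩, fun ⟨_, k, _, hk⟩ => ⟨k, hk⟩⟩
  rw [hunion, hmono.measure_iUnion, ENNReal.mul_iSup]
  exact iSup_le fun N => hF.mul_measure_exceedSet_le hFol hne hψ t N

end Maximal

section PointwiseErgodic

variable [Group G] [MulAction G X]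

theorem abs_sum_comp_smul_sub_le [DecidableEq G] {φ : X → ℝ} {M : ℝ} (hM : ∀ x, |φ x| ≤ M) (g : G)
    (A : Finset G) (x : X) :
    |∑ h ∈ A, (φ (g • h • x) - φ (h • x))| ≤ 2 * M * #(g • A \ A) := by
  have hshift : ∑ h ∈ A, φ (g • h • x) = ∑ h ∈ g • A, φ (h • x) := by
    rw [← Finset.image_smul, Finset.sum_image (MulAction.injective g).injOn]
    simp only [smul_smul, smul_eq_mul]
  have hbound : ∀ B : Finset G, |∑ h ∈ B, φ (h • x)| ≤ #B * M := fun B => by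
    rw [← nsmul_eq_mul]
    exact (Finset.abs_sum_le_sum_abs _ _).trans (Finset.sum_le_card_nsmul _ _ _ fun h _ => hM _)
  have hcard : #(A \ g • A) = #(g • A \ A) :=
    Finset.card_sdiff_comm (Finset.card_smul_finset g A).symm
  calc |∑ h ∈ A, (φ (g • h • x) - φ (h • x))|
    _ = |∑ h ∈ g • A \ A, φ (h • x) - ∑ h ∈ A \ g • A, φ (h • x)| := by
      rw [Finset.sum_sub_distrib, hshift, Finset.sum_sdiff_sub_sum_sdiff]
    _ ≤ |∑ h ∈ g • A \ A, φ (h • x)| + |∑ h ∈ A \ g • A, φ (h • x)| := abs_sub _ _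
    _ ≤ #(g • A \ A) * M + #(A \ g • A) * M := add_le_add (hbound _) (hbound _)
    _ = 2 * M * #(g • A \ A) := by rw [hcard]; ring

variable [MeasurableSpace X] {μ : Measure X} {F : ℕ → Finset G}

/-- The conclusion of the pointwise ergodic theorem along `F` for the function `ψ`, with the limit
that is expected for an ergodic probability measure. -/
def IsPointwiseErgodic (μ : Measure X) (F : ℕ → Finset G) (ψ : X → ℝ) : Prop :=
  ∀ᵐ x ∂μ, Tendsto (fun n => 𝔼 h ∈ F n, ψ (h • x)) atTop (𝓝 (∫ y, ψ y ∂μ))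

namespace IsPointwiseErgodic

variable {φ ψ : X → ℝ}

theorem congr_ae [Countable G] [MeasurableConstSMul G X] [SMulInvariantMeasure G X μ]
    (hψ : IsPointwiseErgodic μ F ψ) (hφψ : φ =ᵐ[μ] ψ) : IsPointwiseErgodic μ F φ := by
  have horbit : ∀ᵐ x ∂μ, ∀ g : G, φ (g • x) = ψ (g • x) := ae_all_iff.mpr fun g =>
    (measurePreserving_smul g μ).quasiMeasurePreserving.ae_eq_comp hφψ
  filter_upwards [hψ, horbit] with x hx hφx
  simpa only [hφx, integral_congr_ae hφψ] using hx

theorem add (hφ : IsPointwiseErgodic μ F φ) (hψ : IsPointwiseErgodic μ F ψ)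
    (hφi : Integrable φ μ) (hψi : Integrable ψ μ) : IsPointwiseErgodic μ F (φ + ψ) := by
  filter_upwards [hφ, hψ] with x hφx hψx
  simp only [Pi.add_apply, Finset.expect_add_distrib, integral_add hφi hψi]
  exact hφx.add hψx

theorem const_smul (hψ : IsPointwiseErgodic μ F ψ) (c : ℝ) : IsPointwiseErgodic μ F (c • ψ) := by
  filter_upwards [hψ] with x hx
  simp only [Pi.smul_apply, smul_eq_mul, ← Finset.mul_expect, integral_const_mul]
  exact hx.const_mul c

protected theorem const [IsProbabilityMeasure μ] (hne : ∀ᶠ n in atTop, (F n).Nonempty) (c : ℝ) :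
    IsPointwiseErgodic μ F fun _ => c := by
  refine .of_forall fun x => tendsto_const_nhds.congr' ?_
  filter_upwards [hne] with n hn
  simp only [integral_const, probReal_univ, one_smul, Finset.expect_const hn]

end IsPointwiseErgodic

theorem exists_ae_eq_const_of_forall_comp_smul_ae_eq (G : Type*) [Group G] [MulAction G X]
    [ErgodicSMul G X μ] {f : X → ℝ} (hf : AEMeasurable f μ)
    (hinv : ∀ g : G, (fun x => f (g • x)) =ᵐ[μ] f) : ∃ c, f =ᵐ[μ] fun _ => c := by
  refine exists_eventuallyEq_const_of_forall_separating MeasurableSet fun U hU => ?_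
  refine eventuallyConst_set.mp (aeconst_of_forall_preimage_smul_ae_eq G
    (hf.nullMeasurableSet_preimage hU) fun g => ?_)
  filter_upwards [hinv g] with x hx
  exact congrArg (· ∈ U) hx

theorem IsFolnerSeq.isPointwiseErgodic_comp_smul_sub [MeasurableConstSMul G X]
    [SMulInvariantMeasure G X μ] (hFol : IsFolnerSeq F)
    {φ : X → ℝ} (hφ : Integrable φ μ) {M : ℝ} (hM : ∀ x, |φ x| ≤ M) (g : G) :
    IsPointwiseErgodic μ F fun x => φ (g • x) - φ x := by
  classical
  have hφg : Integrable (fun x => φ (g • x)) μ :=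
    (measurePreserving_smul g μ).integrable_comp_of_integrable hφ
  have hintegral : ∫ x, (φ (g • x) - φ x) ∂μ = 0 := by
    rw [integral_sub hφg hφ, integral_smul_eq_self, sub_self]
  refine .of_forall fun x => ?_
  rw [hintegral]
  refine squeeze_zero_norm (fun n => ?_)
    (by simpa using (hFol.tendsto_card_smul_sdiff g).const_mul (2 * M))
  rw [Finset.expect_eq_sum_div_card, Real.norm_eq_abs, abs_div, Nat.abs_cast, ← mul_div_assoc]
  gcongr
  exact abs_sum_comp_smul_sub_le hM g (F n) x

theorem eventually_abs_expect_sub_integral_le {ψ v : X → ℝ} {ε : ℝ≥0} (hε : 0 < ε)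
    {x : X} (hψ : Integrable ψ μ) (hv : Integrable v μ) (hψv : ∫⁻ y, ‖ψ y - v y‖ₑ ∂μ ≤ ε)
    (hx : ∀ k, ∑ h ∈ F k, ‖ψ (h • x) - v (h • x)‖ₑ ≤ ε * #(F k))
    (hlim : Tendsto (fun n => 𝔼 h ∈ F n, v (h • x)) atTop (𝓝 (∫ y, v y ∂μ))) :
    ∀ᶠ n in atTop, |𝔼 h ∈ F n, ψ (h • x) - ∫ y, ψ y ∂μ| ≤ 3 * ε := by
  have hintegral : |∫ y, v y ∂μ - ∫ y, ψ y ∂μ| ≤ ε := by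
    rw [abs_sub_comm, ← integral_sub hψ hv, ← Real.norm_eq_abs, ← coe_nnnorm, NNReal.coe_le_coe,
      ← ENNReal.coe_le_coe, ← enorm_eq_nnnorm]
    exact (enorm_integral_le_lintegral_enorm _).trans hψv
  have havg : ∀ k, |𝔼 h ∈ F k, ψ (h • x) - 𝔼 h ∈ F k, v (h • x)| ≤ ε := fun k => by
    have hsum : ∑ h ∈ F k, |ψ (h • x) - v (h • x)| ≤ ε * #(F k) := by
      have := hx k
      simp only [enorm_eq_nnnorm] at this
      simpa only [← Real.norm_eq_abs, ← coe_nnnorm] using mod_cast this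
    rw [← Finset.expect_sub_distrib]
    refine (Finset.abs_expect_le _ _).trans ?_
    rw [Finset.expect_eq_sum_div_card]
    exact div_le_of_le_mul₀ (Nat.cast_nonneg _) ε.2 hsum
  filter_upwards [Metric.tendsto_nhds.mp hlim ε hε] with n hn
  rw [Real.dist_eq] at hn
  have := abs_sub_le (𝔼 h ∈ F n, ψ (h • x)) (𝔼 h ∈ F n, v (h • x)) (∫ y, ψ y ∂μ)
  have := abs_sub_le (𝔼 h ∈ F n, v (h • x)) (∫ y, v y ∂μ) (∫ y, ψ y ∂μ)
  linarith [havg n]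

section Approximation

variable [DecidableEq G] [MeasurableConstSMul G X] [SMulInvariantMeasure G X μ] {C : ℝ≥0}

theorem IsTemperedWith.mul_measure_not_eventually_le (hF : IsTemperedWith F C)
    (hFol : IsFolnerSeq F) (hne : ∀ᶠ n in atTop, (F n).Nonempty) {ψ v : X → ℝ} {ε : ℝ≥0}
    (hε : 0 < ε) (hψ : Integrable ψ μ) (hv : Integrable v μ) (hve : IsPointwiseErgodic μ F v)
    (hψv : ∫⁻ y, ‖ψ y - v y‖ₑ ∂μ ≤ ε) :
    (ε / 2 : ℝ≥0) * μ {x | ¬∀ᶠ n in atTop, |𝔼 h ∈ F n, ψ (h • x) - ∫ y, ψ y ∂μ| ≤ 3 * ε} ≤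
      2 * (C + 1) * ∫⁻ y, ‖ψ y - v y‖ₑ ∂μ := by
  refine le_trans ?_ (hF.mul_measure_iUnion_exceedSet_le hFol hne
    (hψ.sub hv).aestronglyMeasurable.enorm (ε / 2 : ℝ≥0))
  have htwo : 2 * ((ε / 2 : ℝ≥0) : ℝ≥0∞) = ε := by
    exact_mod_cast mul_div_cancel₀ ε two_ne_zero
  rw [htwo]
  refine mul_le_mul' le_rfl (measure_mono_ae (hve.mono fun x hlim hx => ?_))
  by_contra hx'
  exact hx (eventually_abs_expect_sub_integral_le hε hψ hv hψv
    (fun k => le_of_not_gt fun hk => hx' ⟨k, hk⟩) hlim)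

theorem IsTemperedWith.isPointwiseErgodic_of_approx (hF : IsTemperedWith F C)
    (hFol : IsFolnerSeq F) (hne : ∀ᶠ n in atTop, (F n).Nonempty) {ψ : X → ℝ}
    (hψ : Integrable ψ μ)
    (happrox : ∀ ρ : ℝ≥0, 0 < ρ → ∃ v, Integrable v μ ∧ IsPointwiseErgodic μ F v ∧
      ∫⁻ y, ‖ψ y - v y‖ₑ ∂μ ≤ ρ) :
    IsPointwiseErgodic μ F ψ := by
  have hae : ∀ ε : ℝ≥0, 0 < ε →
      ∀ᵐ x ∂μ, ∀ᶠ n in atTop, |𝔼 h ∈ F n, ψ (h • x) - ∫ y, ψ y ∂μ| ≤ 3 * ε := fun ε hε => by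
    set bad := {x | ¬∀ᶠ n in atTop, |𝔼 h ∈ F n, ψ (h • x) - ∫ y, ψ y ∂μ| ≤ 3 * ε}
    have hle : ∀ᶠ ρ : ℝ≥0 in 𝓝[>] 0, (ε / 2 : ℝ≥0) * μ bad ≤ 2 * (C + 1) * ρ := by
      filter_upwards [Ioo_mem_nhdsGT hε] with ρ hρ
      obtain ⟨v, hvi, hve, hψv⟩ := happrox ρ hρ.1
      refine (hF.mul_measure_not_eventually_le hFol hne hε hψ hvi hve
        (hψv.trans (by exact_mod_cast hρ.2.le))).trans (by gcongr)
    have hlim : Tendsto (fun ρ : ℝ≥0 => 2 * ((C : ℝ≥0∞) + 1) * ρ) (𝓝[>] 0) (𝓝 0) := by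
      have : Tendsto (fun ρ : ℝ≥0 => 2 * (C + 1) * ρ) (𝓝[>] 0) (𝓝 0) :=
        tendsto_nhdsWithin_of_tendsto_nhds (Continuous.tendsto' (by fun_prop) _ _ (mul_zero _))
      simpa using ENNReal.tendsto_coe.mpr this
    have hbad : (ε / 2 : ℝ≥0) * μ bad = 0 := le_zero_iff.mp (ge_of_tendsto hlim hle)
    exact (mul_eq_zero.mp hbad).resolve_left (by simpa using hε.ne')
  have hae' : ∀ᵐ x ∂μ, ∀ m : ℕ, ∀ᶠ n in atTop,
      |𝔼 h ∈ F n, ψ (h • x) - ∫ y, ψ y ∂μ| ≤ 3 * (1 / (m + 1) : ℝ≥0) :=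
    ae_all_iff.mpr fun m => hae _ (by positivity)
  filter_upwards [hae'] with x hx
  refine Metric.tendsto_nhds.mpr fun ε hε => ?_
  obtain ⟨m, hm⟩ := exists_nat_one_div_lt (show 0 < ε / 3 by positivity)
  filter_upwards [hx m] with n hn
  rw [Real.dist_eq]
  push_cast at hn
  linarith

end Approximation

section L2

variable [Countable G] [MeasurableConstSMul G X]

/-- The square-integrable functions for which the pointwise ergodic theorem along `F` holds. -/
def pointwiseErgodicL2 (μ : Measure X) [IsProbabilityMeasure μ]
    [SMulInvariantMeasure G X μ] (F : ℕ → Finset G) (hne : ∀ᶠ n in atTop, (F n).Nonempty) :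
    Submodule ℝ (Lp ℝ 2 μ) where
  carrier := {f | IsPointwiseErgodic μ F f}
  add_mem' {f g} hf hg := (hf.add hg ((Lp.memLp f).integrable one_le_two)
    ((Lp.memLp g).integrable one_le_two)).congr_ae (Lp.coeFn_add f g)
  zero_mem' := (IsPointwiseErgodic.const hne 0).congr_ae (Lp.coeFn_zero ℝ 2 μ)
  smul_mem' c f hf := (hf.const_smul c).congr_ae (Lp.coeFn_smul c f)

variable [SMulInvariantMeasure G X μ] [IsProbabilityMeasure μ]

theorem integral_eq_zero_of_mem_orthogonal (hne : ∀ᶠ n in atTop, (F n).Nonempty) {f : Lp ℝ 2 μ}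
    (hf : f ∈ (pointwiseErgodicL2 μ F hne)ᗮ) : ∫ x, f x ∂μ = 0 := by
  have hone : indicatorConstLp 2 MeasurableSet.univ (measure_ne_top μ _) (1 : ℝ) ∈
      pointwiseErgodicL2 μ F hne :=
    (IsPointwiseErgodic.const hne 1).congr_ae
      (by rw [indicatorConstLp_univ]; exact Lp.coeFn_const 2 μ 1)
  rw [← setIntegral_univ, ← L2.inner_indicatorConstLp_one .univ (measure_ne_top μ _)]
  exact (Submodule.mem_orthogonal _ f).mp hf _ hone

theorem IsFolnerSeq.indicatorConstLp_smul_sub_mem (hFol : IsFolnerSeq F)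
    (hne : ∀ᶠ n in atTop, (F n).Nonempty) {A : Set X} (hA : MeasurableSet A) (g : G) :
    indicatorConstLp 2 (hA.const_smul g) (measure_ne_top μ _) (1 : ℝ) -
      indicatorConstLp 2 hA (measure_ne_top μ _) (1 : ℝ) ∈ pointwiseErgodicL2 μ F hne := by
  have hcobound := hFol.isPointwiseErgodic_comp_smul_sub (μ := μ) (φ := A.indicator 1)
    ((integrable_const 1).indicator hA) (M := 1) (fun x => by
      by_cases hx : x ∈ A <;> simp [hx]) g⁻¹
  refine hcobound.congr_ae ?_
  filter_upwards [Lp.coeFn_sub (indicatorConstLp 2 (hA.const_smul g) (measure_ne_top μ _) (1 : ℝ))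
    (indicatorConstLp 2 hA (measure_ne_top μ _) (1 : ℝ)),
    indicatorConstLp_coeFn (p := 2) (hs := hA.const_smul g) (hμs := measure_ne_top μ _)
      (c := (1 : ℝ)),
    indicatorConstLp_coeFn (p := 2) (hs := hA) (hμs := measure_ne_top μ _) (c := (1 : ℝ))]
    with x hx hxgA hxA
  rw [hx, Pi.sub_apply, hxgA, hxA]
  have hmem : x ∈ g • A ↔ g⁻¹ • x ∈ A := Set.mem_smul_set_iff_inv_smul_mem
  by_cases h : g⁻¹ • x ∈ A <;> simp [Set.indicator, hmem, h]

theorem IsFolnerSeq.comp_smul_ae_eq_of_mem_orthogonal (hFol : IsFolnerSeq F)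
    (hne : ∀ᶠ n in atTop, (F n).Nonempty) {f : Lp ℝ 2 μ}
    (hf : f ∈ (pointwiseErgodicL2 μ F hne)ᗮ) (g : G) : (fun x => f (g • x)) =ᵐ[μ] f := by
  have hfi : Integrable f μ := (Lp.memLp f).integrable one_le_two
  have hfg : Integrable (fun x => f (g • x)) μ :=
    (measurePreserving_smul g μ).integrable_comp_of_integrable hfi
  refine hfg.ae_eq_of_forall_setIntegral_eq _ _ hfi fun A hA _ => ?_
  have hinner := (Submodule.mem_orthogonal _ f).mp hf _
    (hFol.indicatorConstLp_smul_sub_mem hne hA g)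
  rw [inner_sub_left, L2.inner_indicatorConstLp_one, L2.inner_indicatorConstLp_one,
    sub_eq_zero] at hinner
  rw [← hinner, ← Set.image_smul]
  exact ((measurePreserving_smul g μ).setIntegral_image_emb
    (measurableEmbedding_const_smul g) _ _).symm

theorem IsTemperedWith.isClosed_pointwiseErgodicL2 [DecidableEq G] {C : ℝ≥0}
    (hF : IsTemperedWith F C) (hFol : IsFolnerSeq F) (hne : ∀ᶠ n in atTop, (F n).Nonempty) :
    IsClosed (pointwiseErgodicL2 μ F hne : Set (Lp ℝ 2 μ)) := by
  refine isClosed_of_closure_subset fun f hf => ?_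
  refine hF.isPointwiseErgodic_of_approx hFol hne ((Lp.memLp f).integrable one_le_two)
    fun ρ hρ => ?_
  obtain ⟨v, hv, hfv⟩ := EMetric.mem_closure_iff.mp hf ρ (by exact_mod_cast hρ)
  refine ⟨v, (Lp.memLp v).integrable one_le_two, hv, ?_⟩
  calc ∫⁻ y, ‖f y - v y‖ₑ ∂μ
    _ = eLpNorm (⇑f - ⇑v) 1 μ := eLpNorm_one_eq_lintegral_enorm.symm
    _ ≤ eLpNorm (⇑f - ⇑v) 2 μ := eLpNorm_le_eLpNorm_of_exponent_le one_le_two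
      ((Lp.aestronglyMeasurable f).sub (Lp.aestronglyMeasurable v))
    _ = edist f v := (Lp.edist_def f v).symm
    _ ≤ ρ := hfv.le

end L2

section Ergodic

variable [Countable G] [DecidableEq G] [MeasurableConstSMul G X] [ErgodicSMul G X μ]
  [IsProbabilityMeasure μ] {C : ℝ≥0}

theorem IsTemperedWith.pointwiseErgodicL2_eq_top (hF : IsTemperedWith F C)
    (hFol : IsFolnerSeq F) (hne : ∀ᶠ n in atTop, (F n).Nonempty) :
    pointwiseErgodicL2 μ F hne = ⊤ := by
  rw [← (hF.isClosed_pointwiseErgodicL2 hFol hne).submodule_topologicalClosure_eq,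
    Submodule.topologicalClosure_eq_top_iff, Submodule.eq_bot_iff]
  intro f hf
  obtain ⟨c, hc⟩ := exists_ae_eq_const_of_forall_comp_smul_ae_eq G
    (Lp.aestronglyMeasurable f).aemeasurable fun g =>
      hFol.comp_smul_ae_eq_of_mem_orthogonal hne hf g
  have hc0 : c = 0 := by
    simpa [integral_congr_ae hc] using integral_eq_zero_of_mem_orthogonal hne hf
  rw [Lp.eq_zero_iff_ae_eq_zero]
  exact hc.trans (.of_forall fun _ => hc0)

theorem IsTemperedWith.isPointwiseErgodic (hF : IsTemperedWith F C)
    (hFol : IsFolnerSeq F) (hne : ∀ᶠ n in atTop, (F n).Nonempty) {ψ : X → ℝ}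
    (hψ : Integrable ψ μ) : IsPointwiseErgodic μ F ψ := by
  refine hF.isPointwiseErgodic_of_approx hFol hne hψ fun ρ hρ => ?_
  obtain ⟨v, hψv, -⟩ := (memLp_one_iff_integrable.mpr hψ).exists_simpleFunc_eLpNorm_sub_lt
    one_ne_top (ENNReal.coe_ne_zero.mpr hρ.ne')
  have hv := v.memLp_of_isFiniteMeasure 2 μ
  have hmem : hv.toLp v ∈ pointwiseErgodicL2 μ F hne := by
    rw [hF.pointwiseErgodicL2_eq_top hFol hne]
    exact Submodule.mem_top
  refine ⟨v, v.integrable_of_isFiniteMeasure, hmem.congr_ae hv.coeFn_toLp.symm, ?_⟩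
  rw [eLpNorm_one_eq_lintegral_enorm] at hψv
  exact hψv.le

end Ergodic

end PointwiseErgodic

section Shearer

variable {Ω J κ : Type*} [Fintype κ]

theorem sum_prod_rpow_le_prod_sum_rpow (s : Finset J) (f : J → κ → ℝ≥0∞) {p : J → ℝ}
    (hp : ∑ j ∈ s, p j = 1) (hp0 : ∀ j ∈ s, 0 ≤ p j) :
    ∑ c, ∏ j ∈ s, f j c ^ p j ≤ ∏ j ∈ s, (∑ c, f j c) ^ p j := by
  let _ : MeasurableSpace κ := ⊤
  simpa only [lintegral_fintype, measure_singleton, Measure.count_singleton, mul_one] using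
    ENNReal.lintegral_prod_norm_pow_le (μ := Measure.count) s
      (fun j _ => (measurable_of_finite (f j)).aemeasurable) hp hp0

variable [MeasurableSpace Ω] [MeasurableSpace κ] [MeasurableSingletonClass κ]

theorem sum_prod_measure_rpow_le_of_sum_eq_one {φ : Ω → κ} (hφ : Measurable φ)
    (ν : J → Measure Ω) {s : Finset J} {p : J → ℝ} (hp0 : ∀ j ∈ s, 0 ≤ p j)
    (R : J → Prop) [DecidablePred R] (hp : ∑ j ∈ s with R j, p j = 1) :
    ∑ c, ∏ j ∈ s, ν j {y | R j → φ y = c} ^ p j ≤ ∏ j ∈ s, ν j univ ^ p j := by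
  have hin : ∀ c, ∏ j ∈ s with R j, ν j {y | R j → φ y = c} ^ p j =
      ∏ j ∈ s with R j, ν j (φ ⁻¹' {c}) ^ p j := fun c =>
    Finset.prod_congr rfl fun j hj => by
      simp only [(Finset.mem_filter.mp hj).2, true_imp_iff]
      rfl
  have hout : ∀ c, ∏ j ∈ s with ¬R j, ν j {y | R j → φ y = c} ^ p j =
      ∏ j ∈ s with ¬R j, ν j univ ^ p j := fun c =>
    Finset.prod_congr rfl fun j hj => by
      simp only [(Finset.mem_filter.mp hj).2, false_imp_iff, Set.ofPred_true]
  have hsum : ∀ j, ∑ c, ν j (φ ⁻¹' {c}) = ν j univ := fun j => by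
    simpa using sum_measure_preimage_singleton (μ := ν j) Finset.univ
      fun c _ => hφ (measurableSet_singleton c)
  simp only [← Finset.prod_filter_mul_prod_filter_not s R, hin, hout, ← Finset.sum_mul]
  refine mul_le_mul' ?_ le_rfl
  refine (sum_prod_rpow_le_prod_sum_rpow _ _ hp fun j hj => hp0 j ?_).trans_eq ?_
  · exact (Finset.mem_filter.mp hj).1
  · simp only [hsum]

theorem sum_fin_prod_measure_rpow_le {n : ℕ} {φ : Fin n → Ω → κ} (hφ : ∀ i, Measurable (φ i))
    (ν : J → Measure Ω) {s : Finset J} {p : J → ℝ} (hp0 : ∀ j ∈ s, 0 ≤ p j)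
    (R : Fin n → J → Prop) [∀ i, DecidablePred (R i)] (hp : ∀ i, ∑ j ∈ s with R i j, p j = 1) :
    ∑ u : Fin n → κ, ∏ j ∈ s, ν j {y | ∀ i, R i j → φ i y = u i} ^ p j ≤
      ∏ j ∈ s, ν j univ ^ p j := by
  induction n generalizing ν with
  | zero => simp
  | succ n ih =>
    have hcons : ∀ c (u : Fin n → κ) j,
        ν j {y | ∀ i, R i j → φ i y = Fin.consEquiv (fun _ => κ) (c, u) i} =
          (ν j).restrict {y | R 0 j → φ 0 y = c} {y | ∀ i : Fin n, R i.succ j → φ i.succ y = u i} :=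
      fun c u j => by
        rw [Measure.restrict_apply (by measurability)]
        simp [Fin.forall_fin_succ, Set.ofPred_and, Set.inter_comm]
    rw [← (Fin.consEquiv fun _ => κ).sum_comp, Fintype.sum_prod_type]
    simp only [hcons]
    calc _ ≤ ∑ c, ∏ j ∈ s, (ν j).restrict {y | R 0 j → φ 0 y = c} univ ^ p j :=
          Finset.sum_le_sum fun c _ => ih (fun i => hφ i.succ) _ _ fun i => hp i.succ
      _ = ∑ c, ∏ j ∈ s, ν j {y | R 0 j → φ 0 y = c} ^ p j := by
        simp only [Measure.restrict_apply_univ]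
      _ ≤ ∏ j ∈ s, ν j univ ^ p j :=
        sum_prod_measure_rpow_le_of_sum_eq_one (hφ 0) ν hp0 (R 0) (hp 0)

theorem sum_prod_measure_rpow_le {ι : Type*} [Fintype ι] [DecidableEq ι] {φ : ι → Ω → κ}
    (hφ : ∀ i, Measurable (φ i)) (ν : J → Measure Ω) {s : Finset J} {p : J → ℝ}
    (hp0 : ∀ j ∈ s, 0 ≤ p j) (R : ι → J → Prop) [∀ i, DecidablePred (R i)]
    (hp : ∀ i, ∑ j ∈ s with R i j, p j = 1) :
    ∑ u : ι → κ, ∏ j ∈ s, ν j {y | ∀ i, R i j → φ i y = u i} ^ p j ≤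
      ∏ j ∈ s, ν j univ ^ p j := by
  have e := (Fintype.equivFin ι).symm
  rw [← (e.arrowCongr (.refl κ)).sum_comp]
  refine (Finset.sum_congr rfl fun u _ => ?_).trans_le
    (sum_fin_prod_measure_rpow_le (fun i => hφ (e i)) ν hp0 (fun i => R (e i)) fun i => hp (e i))
  simp [e.symm.forall_congr_left]

theorem measure_setOf_measure_fiber_le {β : Type*} [Fintype β] (μ : Measure Ω) (W : Ω → β)
    (c : β → ℝ≥0∞) : μ {x | μ (W ⁻¹' {W x}) ≤ c (W x)} ≤ ∑ b, c b := by
  classical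
  have hsub : {x | μ (W ⁻¹' {W x}) ≤ c (W x)} ⊆
      ⋃ b ∈ ({b | μ (W ⁻¹' {b}) ≤ c b} : Finset β), W ⁻¹' {b} := fun x hx =>
    Set.mem_biUnion (x := W x) (by simpa using hx) rfl
  calc μ {x | μ (W ⁻¹' {W x}) ≤ c (W x)}
    _ ≤ ∑ b with μ (W ⁻¹' {b}) ≤ c b, μ (W ⁻¹' {b}) :=
      (measure_mono hsub).trans (measure_biUnion_finset_le _ _)
    _ ≤ ∑ b with μ (W ⁻¹' {b}) ≤ c b, c b :=
      Finset.sum_le_sum fun b hb => (Finset.mem_filter.mp hb).2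
    _ ≤ ∑ b, c b := Finset.sum_le_sum_of_subset (Finset.filter_subset _ _)

end Shearer

section Information

theorem sum_negMulLog_le_log_card {β : Type*} [Fintype β] [Nonempty β] {q : β → ℝ}
    (hq0 : ∀ b, 0 ≤ q b) (hq : ∑ b, q b = 1) :
    ∑ b, (q b).negMulLog ≤ Real.log (Fintype.card β) := by
  set N : ℝ := (Fintype.card β : ℝ) with hN
  have hN0 : 0 < N := Nat.cast_pos.mpr Fintype.card_pos
  have hpoint : ∀ b, (q b).negMulLog ≤ q b * Real.log N + (N⁻¹ - q b) := fun b => by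
    have h := Real.negMulLog_le_one_sub_self (mul_nonneg hN0.le (hq0 b))
    rw [Real.negMulLog_mul, Real.negMulLog] at h
    field_simp
    linarith
  calc ∑ b, (q b).negMulLog
    _ ≤ ∑ b, (q b * Real.log N + (N⁻¹ - q b)) := Finset.sum_le_sum fun b _ => hpoint b
    _ = Real.log N := by
      rw [Finset.sum_add_distrib, Finset.sum_sub_distrib, ← Finset.sum_mul, hq]
      simp [← hN, hN0.ne']

variable {ι Ω κ : Type*}

/-- The finite word of symbols that the maps `φ i`, `i ∈ F`, read off at a point. -/
def jointWord (φ : ι → Ω → κ) (F : Finset ι) (x : Ω) : F → κ :=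
  fun i => φ i x

/-- The atom containing `x` of the finite partition generated by the maps `φ i`, `i ∈ F`. -/
def jointAtom (φ : ι → Ω → κ) (F : Finset ι) (x : Ω) : Set Ω :=
  jointWord φ F ⁻¹' {jointWord φ F x}

theorem mem_jointAtom {φ : ι → Ω → κ} {F : Finset ι} {x y : Ω} :
    y ∈ jointAtom φ F x ↔ ∀ i ∈ F, φ i y = φ i x := by
  simp [jointAtom, jointWord, funext_iff]

variable [MeasurableSpace Ω]

theorem ae_measure_jointAtom_ne_zero [Finite κ] (μ : Measure Ω) (φ : ι → Ω → κ) (F : Finset ι) :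
    ∀ᵐ x ∂μ, μ (jointAtom φ F x) ≠ 0 := by
  classical
  cases nonempty_fintype κ
  simpa [ae_iff, jointAtom] using measure_setOf_measure_fiber_le μ (jointWord φ F) 0

/-- The information function of the partition generated by the maps `φ i`, `i ∈ F`. It takes the
junk value `0` on atoms of measure zero. -/
noncomputable def infoFun (μ : Measure Ω) (φ : ι → Ω → κ) (F : Finset ι) (x : Ω) : ℝ :=
  -Real.log (μ.real (jointAtom φ F x))

theorem infoFun_nonneg (μ : Measure Ω) [IsProbabilityMeasure μ] (φ : ι → Ω → κ) (F : Finset ι)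
    (x : Ω) : 0 ≤ infoFun μ φ F x :=
  neg_nonneg.mpr (Real.log_nonpos measureReal_nonneg measureReal_le_one)

theorem infoFun_eq_comp (μ : Measure Ω) (φ : ι → Ω → κ) (F : Finset ι) :
    infoFun μ φ F = (fun u => -Real.log (μ.real (jointWord φ F ⁻¹' {u}))) ∘ jointWord φ F :=
  rfl

theorem exists_infoFun_le [Finite κ] (μ : Measure Ω) (φ : ι → Ω → κ) (F : Finset ι) :
    ∃ M, ∀ x, infoFun μ φ F x ≤ M := by
  obtain ⟨M, hM⟩ := (Set.finite_range
    fun u => -Real.log (μ.real (jointWord φ F ⁻¹' {u}))).bddAbove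
  exact ⟨M, fun x => hM (Set.mem_range_self _)⟩

variable [MeasurableSpace κ] {φ : ι → Ω → κ}

theorem measurable_jointWord (hφ : ∀ i, Measurable (φ i)) (F : Finset ι) :
    Measurable (jointWord φ F) :=
  measurable_pi_lambda _ fun i => hφ i

variable [MeasurableSingletonClass κ] {μ : Measure Ω} [IsProbabilityMeasure μ]

section Finite

variable [Finite κ]

theorem measure_setOf_jointAtom_le [DecidableEq ι] (hφ : ∀ i, Measurable (φ i)) (F : Finset ι)
    {J : Type*} {s : Finset J} {p : J → ℝ} (hp0 : ∀ j ∈ s, 0 ≤ p j) (S : J → Finset ι)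
    (hp : ∀ i ∈ F, ∑ j ∈ s with i ∈ S j, p j = 1) (t : ℝ≥0∞) :
    μ {x | μ (jointAtom φ F x) ≤ t * ∏ j ∈ s, μ (jointAtom φ (S j) x) ^ p j} ≤ t := by
  cases nonempty_fintype κ
  set c : (F → κ) → ℝ≥0∞ := fun u =>
    t * ∏ j ∈ s, μ {y | ∀ i : F, (i : ι) ∈ S j → φ i y = u i} ^ p j
  have hc : ∀ x, t * ∏ j ∈ s, μ (jointAtom φ (S j) x) ^ p j ≤ c (jointWord φ F x) := fun x =>
    mul_le_mul' le_rfl <| Finset.prod_le_prod' fun j hj =>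
      ENNReal.rpow_le_rpow (measure_mono fun y hy i hi => mem_jointAtom.mp hy i hi) (hp0 j hj)
  calc μ {x | μ (jointAtom φ F x) ≤ t * ∏ j ∈ s, μ (jointAtom φ (S j) x) ^ p j}
    _ ≤ μ {x | μ (jointWord φ F ⁻¹' {jointWord φ F x}) ≤ c (jointWord φ F x)} :=
      measure_mono fun x hx => le_trans hx (hc x)
    _ ≤ ∑ u, c u := measure_setOf_measure_fiber_le μ _ c
    _ ≤ t * ∏ j ∈ s, μ univ ^ p j := by
      rw [← Finset.mul_sum]
      exact mul_le_mul' le_rfl (sum_prod_measure_rpow_le (fun i : F => hφ i) (fun _ => μ) hp0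
        (fun i j => (i : ι) ∈ S j) fun i => hp i i.2)
    _ = t := by simp

theorem integrable_infoFun (hφ : ∀ i, Measurable (φ i)) (F : Finset ι) :
    Integrable (infoFun μ φ F) μ := by
  have hmeas : Measurable (infoFun μ φ F) := by
    rw [infoFun_eq_comp]
    exact (measurable_of_finite _).comp (measurable_jointWord hφ F)
  obtain ⟨M, hM⟩ := exists_infoFun_le μ φ F
  refine .of_bound hmeas.aestronglyMeasurable M (.of_forall fun x => ?_)
  rw [Real.norm_of_nonneg (infoFun_nonneg μ φ F x)]
  exact hM x

end Finite

variable [Fintype κ]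

theorem integral_infoFun [DecidableEq ι] (hφ : ∀ i, Measurable (φ i)) (F : Finset ι) :
    ∫ x, infoFun μ φ F x ∂μ = ∑ u, Real.negMulLog (μ.real (jointWord φ F ⁻¹' {u})) := by
  have hW := measurable_jointWord hφ F
  have hmap : ∫ x, infoFun μ φ F x ∂μ =
      ∫ u, -Real.log (μ.real (jointWord φ F ⁻¹' {u})) ∂μ.map (jointWord φ F) := by
    rw [integral_map hW.aemeasurable (measurable_of_finite _).aestronglyMeasurable]
    rfl
  rw [hmap, integral_fintype .of_finite]
  refine Finset.sum_congr rfl fun u _ => ?_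
  rw [map_measureReal_apply hW (measurableSet_singleton u), Real.negMulLog, smul_eq_mul]
  ring

theorem integral_infoFun_le [Nonempty κ] (hφ : ∀ i, Measurable (φ i)) (F : Finset ι) :
    ∫ x, infoFun μ φ F x ∂μ ≤ #F * Real.log (Fintype.card κ) := by
  classical
  have hsum : ∑ u, μ.real (jointWord φ F ⁻¹' {u}) = 1 := by
    rw [sum_measureReal_preimage_singleton Finset.univ
      fun u _ => measurable_jointWord hφ F (measurableSet_singleton u)]
    simp
  rw [integral_infoFun hφ]
  refine (sum_negMulLog_le_log_card (fun _ => measureReal_nonneg) hsum).trans_eq ?_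
  simp

end Information

section Itinerary

variable {κ : Type*} [Group G] [MulAction G X]

/-- The process that observes the orbit of a point through a map `p`, so that its joint atoms over
`F` are the atoms of the partition `⋁_{g ∈ F} g⁻¹𝒫`, where `𝒫` is the partition into fibers
of `p`. -/
def itinerary (p : X → κ) : G → X → κ :=
  fun g x => p (g • x)

theorem preimage_smul_jointAtom [DecidableEq G] (p : X → κ) (A : Finset G) (g : G) (x : X) :
    (g • ·) ⁻¹' jointAtom (itinerary p) A (g • x) = jointAtom (itinerary p) (A * {g}) x := by
  ext y
  simp [mem_jointAtom, itinerary, Finset.mem_mul, mul_smul]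

theorem measure_jointAtom_itinerary_mul_singleton [MeasurableSpace X] [DecidableEq G]
    {μ : Measure X} [SMulInvariantMeasure G X μ] (p : X → κ) (A : Finset G) (g : G) (x : X) :
    μ (jointAtom (itinerary p) (A * {g}) x) = μ (jointAtom (itinerary p) A (g • x)) := by
  rw [← preimage_smul_jointAtom, measure_preimage_smul]

theorem card_filter_mem_mul_singleton [DecidableEq G] (A : Finset G) {E : Finset G} {h : G}
    (hh : h ∈ E) : #{g ∈ A⁻¹ * E | h ∈ A * {g}} = #A := by
  have hfilter : {g ∈ A⁻¹ * E | h ∈ A * {g}} = A⁻¹ * {h} := by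
    ext g
    simp only [Finset.mem_filter, Finset.mem_mul, Finset.mem_inv, Finset.mem_singleton]
    constructor
    · rintro ⟨-, a, ha, _, rfl, rfl⟩
      exact ⟨a⁻¹, ⟨a, ha, rfl⟩, _, rfl, inv_mul_cancel_left a _⟩
    · rintro ⟨_, ⟨a, ha, rfl⟩, _, rfl, rfl⟩
      exact ⟨⟨a⁻¹, ⟨a, ha, rfl⟩, _, hh, rfl⟩, a, ha, _, rfl, mul_inv_cancel_left a _⟩
  rw [hfilter, Finset.card_mul_singleton, Finset.card_inv]

theorem IsFolnerSeq.eventually_sum_mul_le [DecidableEq G] {F : ℕ → Finset G} (hFol : IsFolnerSeq F)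
    (hne : ∀ᶠ n in atTop, (F n).Nonempty) (T : Finset G) {ψ : X → ℝ} {M L ε : ℝ}
    (hψ0 : ∀ x, 0 ≤ ψ x) (hψM : ∀ x, ψ x ≤ M) (hε : 0 < ε) {x : X}
    (hlim : Tendsto (fun n => 𝔼 h ∈ F n, ψ (h • x)) atTop (𝓝 L)) :
    ∀ᶠ n in atTop, ∑ g ∈ T * F n, ψ (g • x) ≤ #(F n) * (L + ε) := by
  have hbound : Tendsto (fun n => 𝔼 h ∈ F n, ψ (h • x) + M * (#((T * F n) \ F n) / #(F n)))
      atTop (𝓝 L) := by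
    simpa using hlim.add ((hFol.tendsto_card_mul_sdiff T).const_mul M)
  filter_upwards [hbound.eventually_le_const (lt_add_of_pos_right L hε), hne] with n hn hFn
  calc ∑ g ∈ T * F n, ψ (g • x)
    _ ≤ ∑ g ∈ F n ∪ (T * F n) \ F n, ψ (g • x) :=
      Finset.sum_le_sum_of_subset_of_nonneg (by simp) fun _ _ _ => hψ0 _
    _ = ∑ g ∈ F n, ψ (g • x) + ∑ g ∈ (T * F n) \ F n, ψ (g • x) :=
      Finset.sum_union Finset.disjoint_sdiff
    _ ≤ ∑ g ∈ F n, ψ (g • x) + #((T * F n) \ F n) * M := by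
      gcongr
      rw [← nsmul_eq_mul]
      exact Finset.sum_le_card_nsmul _ _ _ fun g _ => hψM _
    _ = #(F n) * (𝔼 h ∈ F n, ψ (h • x) + M * (#((T * F n) \ F n) / #(F n))) := by
      have hcard : (#(F n) : ℝ) ≠ 0 := Nat.cast_ne_zero.mpr hFn.card_ne_zero
      rw [Finset.expect_eq_sum_div_card]
      field_simp
    _ ≤ #(F n) * (L + ε) := by gcongr

theorem neg_log_toReal_le_of_mul_prod_rpow_lt {J : Type*} {s : Finset J} {m : ℝ≥0∞} (hm : m ≠ ⊤)
    {f : J → ℝ≥0∞} (hf0 : ∀ j ∈ s, f j ≠ 0) (hf : ∀ j ∈ s, f j ≠ ⊤) {r t : ℝ}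
    (h : ENNReal.ofReal (Real.exp (-t)) * ∏ j ∈ s, f j ^ r < m) :
    -Real.log m.toReal ≤ t + r * ∑ j ∈ s, -Real.log (f j).toReal := by
  have hpos : ∀ j ∈ s, 0 < (f j).toReal := fun j hj => ENNReal.toReal_pos (hf0 j hj) (hf j hj)
  have hreal : Real.exp (-t) * ∏ j ∈ s, (f j).toReal ^ r ≤ m.toReal := by
    have := ENNReal.toReal_mono hm h.le
    simpa only [ENNReal.toReal_mul, ENNReal.toReal_ofReal (Real.exp_nonneg _), ENNReal.toReal_prod,
      ← ENNReal.toReal_rpow] using this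
  have hprod : 0 < ∏ j ∈ s, (f j).toReal ^ r :=
    Finset.prod_pos fun j hj => Real.rpow_pos_of_pos (hpos j hj) r
  have hlog := Real.log_le_log (mul_pos (Real.exp_pos _) hprod) hreal
  rw [Real.log_mul (Real.exp_ne_zero _) hprod.ne', Real.log_exp,
    Real.log_prod fun j hj => (Real.rpow_pos_of_pos (hpos j hj) r).ne',
    Finset.sum_congr rfl fun j hj => Real.log_rpow (hpos j hj) r, ← Finset.mul_sum] at hlog
  rw [Finset.sum_neg_distrib]
  linarith

variable [MeasurableSpace X] [MeasurableConstSMul G X] [MeasurableSpace κ]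

theorem measurable_itinerary {p : X → κ} (hp : Measurable p) (g : G) :
    Measurable (itinerary p g) :=
  hp.comp (measurable_const_smul g)

variable [MeasurableSingletonClass κ] [Finite κ] {μ : Measure X} [IsProbabilityMeasure μ]
  [SMulInvariantMeasure G X μ] {p : X → κ} {A : Finset G}

theorem measure_setOf_jointAtom_itinerary_le [DecidableEq G] (hp : Measurable p)
    (hA : A.Nonempty) (E : Finset G) (t : ℝ≥0∞) :
    μ {x | μ (jointAtom (itinerary p) E x) ≤
      t * ∏ g ∈ A⁻¹ * E, μ (jointAtom (itinerary p) A (g • x)) ^ (#A : ℝ)⁻¹} ≤ t := by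
  have hA0 : (#A : ℝ) ≠ 0 := Nat.cast_ne_zero.mpr hA.card_ne_zero
  have hweight : ∀ h ∈ E, ∑ g ∈ A⁻¹ * E with h ∈ A * {g}, (#A : ℝ)⁻¹ = 1 := fun h hh => by
    rw [Finset.sum_const, card_filter_mem_mul_singleton A hh, nsmul_eq_mul, mul_inv_cancel₀ hA0]
  have hle := measure_setOf_jointAtom_le (μ := μ) (φ := itinerary p) (s := A⁻¹ * E)
    (p := fun _ => (#A : ℝ)⁻¹) (measurable_itinerary hp) E
    (fun _ _ => inv_nonneg.mpr (Nat.cast_nonneg #A)) (fun g => A * {g})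
  simpa only [measure_jointAtom_itinerary_mul_singleton] using hle hweight t

theorem ae_eventually_infoFun_le_sum [Countable G] [DecidableEq G] {F : ℕ → Finset G} {t : ℕ → ℝ}
    (ht : Summable fun n => Real.exp (-t n)) (hp : Measurable p) (hA : A.Nonempty) :
    ∀ᵐ x ∂μ, ∀ᶠ n in atTop, infoFun μ (itinerary p) (F n) x ≤
      t n + (#A : ℝ)⁻¹ * ∑ g ∈ A⁻¹ * F n, infoFun μ (itinerary p) A (g • x) := by
  have hpos : ∀ᵐ x ∂μ, ∀ g : G, μ (jointAtom (itinerary p) A (g • x)) ≠ 0 :=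
    ae_all_iff.mpr fun g => (measurePreserving_smul g μ).quasiMeasurePreserving.ae
      (ae_measure_jointAtom_ne_zero μ (itinerary p) A)
  have hBC := ae_eventually_notMem (ne_top_of_le_ne_top ht.tsum_ofReal_ne_top
    (ENNReal.tsum_le_tsum fun n => measure_setOf_jointAtom_itinerary_le (μ := μ) hp hA (F n)
      (ENNReal.ofReal (Real.exp (-t n)))))
  filter_upwards [hpos, hBC] with x hx hxn
  filter_upwards [hxn] with n hn
  exact neg_log_toReal_le_of_mul_prod_rpow_lt (measure_ne_top _ _) (fun g _ => hx g)
    (fun _ _ => measure_ne_top _ _) (not_le.mp hn)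

end Itinerary

section UpperBound

variable {κ : Type*} [Group G] [Countable G] [MulAction G X] [MeasurableSpace X]
  [MeasurableConstSMul G X] [Finite κ] [MeasurableSpace κ] [MeasurableSingletonClass κ]
  {μ : Measure X} [IsProbabilityMeasure μ] [ErgodicSMul G X μ] {F : ℕ → Finset G}

theorem ae_eventually_infoFun_le (hFol : IsFolnerSeq F) (hTemp : IsTemperedSeq F)
    (hGrow : GrowthCond F) {p : X → κ} (hp : Measurable p) {A : Finset G} (hA : A.Nonempty)
    {ε : ℝ} (hε : 0 < ε) :
    ∀ᵐ x ∂μ, ∀ᶠ n in atTop, infoFun μ (itinerary p) (F n) x ≤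
      #(F n) * ((∫ y, infoFun μ (itinerary p) A y ∂μ) / #A + ε) := by
  classical
  have hne := hGrow.eventually_nonempty
  obtain ⟨C, hF⟩ := hTemp.exists_isTemperedWith
  obtain ⟨M, hM⟩ := exists_infoFun_le μ (itinerary p) A
  have hcard : (0 : ℝ) < #A := Nat.cast_pos.mpr hA.card_pos
  have herg := hF.isPointwiseErgodic hFol hne
    (integrable_infoFun (μ := μ) (measurable_itinerary hp) A)
  filter_upwards [herg, ae_eventually_infoFun_le_sum (F := F) (μ := μ)
    (hGrow.summable_exp_neg_mul_card (half_pos hε)) hp hA] with x hlim hinfo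
  filter_upwards [hinfo, hFol.eventually_sum_mul_le hne A⁻¹ (infoFun_nonneg μ (itinerary p) A) hM
    (mul_pos hcard (half_pos hε)) hlim] with n hn hsum
  calc infoFun μ (itinerary p) (F n) x
    _ ≤ ε / 2 * #(F n) + (#A : ℝ)⁻¹ * ∑ g ∈ A⁻¹ * F n, infoFun μ (itinerary p) A (g • x) := hn
    _ ≤ ε / 2 * #(F n) + (#A : ℝ)⁻¹ *
        (#(F n) * (∫ y, infoFun μ (itinerary p) A y ∂μ + #A * (ε / 2))) := by gcongr
    _ = #(F n) * ((∫ y, infoFun μ (itinerary p) A y ∂μ) / #A + ε) := by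
      field_simp
      ring

end UpperBound

section Entropy

variable [Group G] [MulAction G X] [MeasurableSpace X]

theorem isMeasPartition_fibers {k : ℕ} {p : X → Fin k} (hp : Measurable p) :
    IsMeasPartition fun i => p ⁻¹' {i} :=
  ⟨fun _ => hp (measurableSet_singleton _), fun _ _ hij => Disjoint.preimage p (by simpa using hij),
    by simp [Set.eq_univ_iff_forall]⟩

variable [MeasurableConstSMul G X] {F : ℕ → Finset G} {k : ℕ} {p : X → Fin k}

theorem partH_fibers (μ : Measure X) [IsProbabilityMeasure μ] (hp : Measurable p) (A : Finset G) :
    partH μ (fun i => p ⁻¹' {i}) A = ∫ x, infoFun μ (itinerary p) A x ∂μ := by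
  classical
  have hcyl : ∀ u : A → Fin k, ⋂ g : A, ((g : G) • ·) ⁻¹' (p ⁻¹' {u g}) =
      jointWord (itinerary p) A ⁻¹' {u} := fun u => by
    ext x
    simp [jointWord, itinerary, funext_iff]
  rw [integral_infoFun (measurable_itinerary hp)]
  simp only [partH, hcyl, measureReal_def]

variable {μ : Measure X} [IsProbabilityMeasure μ]

theorem exists_partH_div_card_lt (hne : ∀ᶠ n in atTop, (F n).Nonempty) (hp : Measurable p) {r : ℝ}
    (hr : partEnt μ F (fun i => p ⁻¹' {i}) < r) :
    ∃ A : Finset G, A.Nonempty ∧ partH μ (fun i => p ⁻¹' {i}) A / #A < r := by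
  have : Nonempty (Fin k) := (nonempty_of_isProbabilityMeasure μ).map p
  have hbdd : ∀ n, partH μ (fun i => p ⁻¹' {i}) (F n) / #(F n) ≤ Real.log k := fun n => by
    rw [partH_fibers μ hp]
    refine div_le_of_le_mul₀ (Nat.cast_nonneg _) (Real.log_natCast_nonneg k) ?_
    simpa [mul_comm] using integral_infoFun_le (μ := μ) (measurable_itinerary hp) (F n)
  obtain ⟨n, hlt, hn⟩ := ((frequently_lt_of_liminf_lt
    (isBoundedUnder_of ⟨_, hbdd⟩).isCoboundedUnder_ge hr).and_eventually hne).exists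
  exact ⟨F n, hn, hlt⟩

end Entropy

theorem exists_measurable_fin_dist_lt [PseudoMetricSpace X] [MeasurableSpace X]
    [OpensMeasurableSpace X] (hX : TotallyBounded (univ : Set X)) {δ : ℝ} (hδ : 0 < δ) :
    ∃ (k : ℕ) (p : X → Fin k), Measurable p ∧ ∀ x y, p x = p y → dist x y < δ := by
  obtain ⟨t, ht, hcover⟩ := Metric.totallyBounded_iff.mp hX (δ / 2) (half_pos hδ)
  have : Finite t := ht
  let q : X → t → Prop := fun x i => x ∈ Metric.ball (i : X) (δ / 2)
  have hq : Measurable q := measurable_pi_lambda _ fun _ =>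
    measurableSet_setOfPred.mp measurableSet_ball
  refine ⟨_, Finite.equivFin (t → Prop) ∘ q, (measurable_of_finite _).comp hq, fun x y hxy => ?_⟩
  obtain ⟨i, hi, hxi⟩ := mem_iUnion₂.mp (hcover (mem_univ x))
  have hyi : y ∈ Metric.ball i (δ / 2) :=
    (congrFun ((Finite.equivFin (t → Prop)).injective hxy) ⟨i, hi⟩).mp hxi
  rw [Metric.mem_ball] at hxi hyi
  linarith [dist_triangle_right x y i]

theorem IsErgodicGAction.ergodicSMul [Group G] [Countable G] [MulAction G X] [MeasurableSpace X]
    [MeasurableConstSMul G X] {μ : Measure X} [IsProbabilityMeasure μ] [SMulInvariantMeasure G X μ]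
    (hμ : IsErgodicGAction G μ) : ErgodicSMul G X μ where
  aeconst_of_forall_preimage_smul_ae_eq {s} hs hinv := by
    let A : Set X := ⋂ g : G, (g • ·) ⁻¹' s
    have hAs : A =ᵐ[μ] s := by
      simpa only [iInter_const] using Filter.EventuallyEq.countable_iInter hinv
    have hAinv : ∀ g : G, (g • ·) ⁻¹' A = A := fun g => by
      ext x
      simp only [A, mem_preimage, mem_iInter, smul_smul]
      exact (Equiv.mulRight g).forall_congr_right (q := fun h => h • x ∈ s)
    have hA : MeasurableSet A := .iInter fun g => measurable_const_smul g hs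
    rw [← hAs.eventuallyConst_iff, eventuallyConst_set']
    exact (hμ A hA hAinv).imp ae_eq_empty.mpr fun h =>
      ae_eq_univ.mpr ((prob_compl_eq_zero_iff hA).mpr h)

section LocalEntropy

theorem locTerm_le_ofReal [MeasurableSpace X] {μ : Measure X} [IsFiniteMeasure μ] {B S : Set X}
    {m : ℕ} {r : ℝ} (hm : 0 < m) (hS : μ S ≠ 0) (hSB : S ⊆ B)
    (h : -Real.log (μ.real S) ≤ m * r) :
    locTerm μ B m ≤ ENNReal.ofReal r := by
  have hpos : 0 < μ.real S := ENNReal.toReal_pos hS (measure_ne_top μ S)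
  rw [locTerm, if_neg (measure_pos_of_superset hSB hS).ne']
  refine ENNReal.ofReal_le_ofReal ?_
  rw [div_le_iff₀' (Nat.cast_pos.mpr hm)]
  exact (neg_le_neg (Real.log_le_log hpos (measureReal_mono hSB))).trans h

variable [Group G] [MetricSpace X] [MulAction G X]

theorem jointAtom_itinerary_subset_bowenBall {κ : Type*} {p : X → κ} {δ : ℝ}
    (hp : ∀ x y, p x = p y → dist x y < δ) (F : Finset G) (x : X) :
    jointAtom (itinerary p) F x ⊆ bowenBall F x δ :=
  fun _ hy g hg => hp _ _ (mem_jointAtom.mp hy g hg).symm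

variable [Countable G] [MeasurableSpace X] [MeasurableConstSMul G X] {μ : Measure X}
  [IsProbabilityMeasure μ] [ErgodicSMul G X μ] {F : ℕ → Finset G} {k : ℕ} {p : X → Fin k} {δ : ℝ}

theorem ae_upLoc_le_of_partEnt_lt (hFol : IsFolnerSeq F) (hTemp : IsTemperedSeq F)
    (hGrow : GrowthCond F) (hp : Measurable p) (hpδ : ∀ x y, p x = p y → dist x y < δ) {r : ℝ}
    (hr : partEnt μ F (fun i => p ⁻¹' {i}) < r) :
    ∀ᵐ x ∂μ, upLoc μ F x δ ≤ ENNReal.ofReal r := by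
  have hne := hGrow.eventually_nonempty
  obtain ⟨A, hA, hAr⟩ := exists_partH_div_card_lt hne hp hr
  have hatom : ∀ᵐ x ∂μ, ∀ n, μ (jointAtom (itinerary p) (F n) x) ≠ 0 :=
    ae_all_iff.mpr fun n => ae_measure_jointAtom_ne_zero μ (itinerary p) (F n)
  filter_upwards [hatom, ae_eventually_infoFun_le hFol hTemp hGrow hp hA (sub_pos.mpr hAr)]
    with x hx hinfo
  refine limsup_le_of_le (by isBoundedDefault) ?_
  filter_upwards [hinfo, hne] with n hn hFn
  rw [← partH_fibers μ hp, add_sub_cancel] at hn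
  exact locTerm_le_ofReal hFn.card_pos (hx n) (jointAtom_itinerary_subset_bowenBall hpδ (F n) x) hn

theorem ae_upLoc_le_ofReal_partEnt (hFol : IsFolnerSeq F) (hTemp : IsTemperedSeq F)
    (hGrow : GrowthCond F) (hp : Measurable p) (hpδ : ∀ x y, p x = p y → dist x y < δ) :
    ∀ᵐ x ∂μ, upLoc μ F x δ ≤ ENNReal.ofReal (partEnt μ F fun i => p ⁻¹' {i}) := by
  obtain ⟨r, -, hr, hlim⟩ := exists_seq_strictAnti_tendsto (partEnt μ F fun i => p ⁻¹' {i})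
  filter_upwards [ae_all_iff.mpr fun j => ae_upLoc_le_of_partEnt_lt hFol hTemp hGrow hp hpδ (hr j)]
    with x hx
  exact ge_of_tendsto' (ENNReal.tendsto_ofReal hlim) hx

end LocalEntropy

theorem brin_katok_upper_general
    [Group G] [Countable G] [MetricSpace X] [MulAction G X] [MeasurableSpace X]
    [OpensMeasurableSpace X] [MeasurableConstSMul G X] (hX : TotallyBounded (univ : Set X))
    (μ : Measure X) [IsProbabilityMeasure μ] [ErgodicSMul G X μ]
    (F : ℕ → Finset G) (hFol : IsFolnerSeq F) (hTemp : IsTemperedSeq F)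
    (hGrow : GrowthCond F) {δ : ℝ} (hδ : 0 < δ) :
    ∀ᵐ x ∂μ, upLoc μ F x δ ≤ measEnt μ F := by
  obtain ⟨k, p, hp, hpδ⟩ := exists_measurable_fin_dist_lt hX hδ
  filter_upwards [ae_upLoc_le_ofReal_partEnt hFol hTemp hGrow hp hpδ] with x hx
  exact hx.trans (le_iSup₂_of_le k _ (le_iSup_of_le (isMeasPartition_fibers hp) le_rfl))

/-- upper bound in the Brin–Katok formula. For a `G`-invariant ergodic
Borel probability measure `μ` and a tempered Følner sequence `{F_n}` with
`lim_n |F_n|/log n = ∞`, for every `δ > 0` and `μ`-a.e. `x`,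
`limsup_n -(1/|F_n|) log μ(B_{F_n}(x,δ)) ≤ h_μ(X,G)`. -/
theorem brin_katok_upper
    [Group G] [Countable G] [MetricSpace X] [CompactSpace X]
    [MulAction G X] [ContinuousConstSMul G X] [MeasurableSpace X] [BorelSpace X]
    (μ : Measure X) [IsProbabilityMeasure μ] [SMulInvariantMeasure G X μ]
    (herg : IsErgodicGAction G μ)
    (F : ℕ → Finset G) (hFol : IsFolnerSeq F) (hTemp : IsTemperedSeq F)
    (hGrow : GrowthCond F) :
    ∀ δ : ℝ, 0 < δ → ∀ᵐ x ∂μ, upLoc μ F x δ ≤ measEnt μ F := by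
  have := herg.ergodicSMul
  exact fun _ => brin_katok_upper_general isCompact_univ.totallyBounded μ F hFol hTemp hGrow
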